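/- For every stationary process (X_i)_{i∈ℤ} over a finite alphabet 𝕏, all positive integers p and k, and n = pk, we have H(X_1^n)/n − H(X_1^k|ℐ)/k ≤ 2/k + (2/n) log₂ k + (3k/n) log₂|𝕏| · (E[D(k, X_1^n)] + 1). -/

import Mathlib

open MeasureTheory Filter Real

variable {𝕏 : Type*} [Fintype 𝕏] [Nonempty 𝕏] [DecidableEq 𝕏]
  [MeasurableSpace 𝕏] [MeasurableSingletonClass 𝕏]

/-- The left shift on two-sided sequences: `(shift ω) i = ω (i + 1)`. -/
def shift (ω : ℤ → 𝕏) : ℤ → 𝕏 := fun i => ω (i + 1)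

/-- The block `X_{s+1}^{s+l}` of a sequence `ω`, as a tuple in `𝕏^l`. -/
def blk (s l : ℕ) (ω : ℤ → 𝕏) : Fin l → 𝕏 := fun i => ω ((s : ℤ) + 1 + (i : ℤ))

/-- Shannon entropy (base 2) of a distribution `p` on a finite set:
`H(p) = -∑_{w : p w > 0} p w * log₂ (p w)` (`logb 2 0 = 0`, so zero-mass
points contribute nothing). -/
noncomputable def Hent {A : Type*} [Fintype A] (p : A → ℝ) : ℝ :=
  -∑ w, p w * Real.logb 2 (p w)

/-- Empirical nonoverlapping-block distribution
`p_k(w, x_1^n) = ⌊n/k⌋⁻¹ ∑_{i=1}^{⌊n/k⌋} 1[x_{(i-1)k+1}^{ik} = w]`. -/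
noncomputable def empDist (k n : ℕ) (ω : ℤ → 𝕏) : (Fin k → 𝕏) → ℝ :=
  fun w => (∑ i ∈ Finset.range (n / k), if blk (i * k) k ω = w then (1 : ℝ) else 0) / (n / k : ℕ)

/-- Plug-in estimator `H(k, x_1^n)` of the block entropy. -/
noncomputable def plugIn (k n : ℕ) (ω : ℤ → 𝕏) : ℝ := Hent (empDist k n ω)

/-- True block distribution `p_k(w) = P(X_1^k = w)`. -/
noncomputable def pblock (μ : Measure (ℤ → 𝕏)) (k : ℕ) : (Fin k → 𝕏) → ℝ :=
  fun w => (μ {ω | blk 0 k ω = w}).toReal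

/-- Block entropy `H(k) = H(p_k)`. -/
noncomputable def Hblock (μ : Measure (ℤ → 𝕏)) (k : ℕ) : ℝ := Hent (pblock μ k)

/-- Number `D(k, x_1^n)` of distinct nonoverlapping `k`-blocks in `x_1^n`. -/
noncomputable def Dcount (k n : ℕ) (ω : ℤ → 𝕏) : ℕ :=
  Set.ncard {w : Fin k → 𝕏 | ∃ i < n / k, blk (i * k) k ω = w}

/-- Length bound `K(k, x_1^n)` of the modified `k`-block code:
`K(k,x_1^n) = 2 log₂ k + (n/k)(H(k,x_1^n) + 2) + 3 k log₂|𝕏| (D(k,x_1^n) + 1)`. -/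
noncomputable def Kcode (k n : ℕ) (ω : ℤ → 𝕏) : ℝ :=
  2 * Real.logb 2 k + ((n : ℝ) / k) * (plugIn k n ω + 2)
    + 3 * k * Real.logb 2 (Fintype.card 𝕏) * (Dcount k n ω + 1)

/-- Conditional probability `P(X_1^k = w | ℐ)` given the shift-invariant
σ-algebra `ℐ`, as a function of the sample point. -/
noncomputable def condP (μ : Measure (ℤ → 𝕏)) (k : ℕ) (w : Fin k → 𝕏) : (ℤ → 𝕏) → ℝ :=
  μ[Set.indicator {ω | blk 0 k ω = w} (fun _ => (1 : ℝ)) | MeasurableSpace.invariants shift]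

/-- Conditional block entropy `H(X_1^k | ℐ) = E[-log₂ P(X_1^k = w | ℐ)|_{w = X_1^k}]`. -/
noncomputable def condH (μ : Measure (ℤ → 𝕏)) (k : ℕ) : ℝ :=
  ∫ ω, -Real.logb 2 (condP μ k (blk 0 k ω) ω) ∂μ

/-- `σ(y) = min(2^y, 1)`. -/
noncomputable def sigmaFn (y : ℝ) : ℝ := min ((2 : ℝ) ^ y) 1

/-- Negative part `x⁻ = -x · 1[x < 0]`. -/
noncomputable def nPart (x : ℝ) : ℝ := if x < 0 then -x else 0

/-! By Gibbs' inequality, the entropy of `X_1^n` is at most the expected length of any code.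
Describe the word of the `p` blocks in two parts: first its type, giving `2 j` bits to the
multiplicity `j` of each block and `k log₂|𝕏|` bits to each distinct block, then the word
itself by the product of its empirical frequencies, at the cost of `p H(k, X_1^n)` bits. So
`H(X_1^n) ≤ E[K(k, X_1^n)]`.
By Gibbs' inequality again, the plug-in entropy `H(k, X_1^n)` is at most the mean over the blocks
`w` of `-log₂ P(X_1^k = w | ℐ)`. As these conditional probabilities are shift-invariant, each term
of the mean has expectation `H(X_1^k|ℐ)`.
-/

open ProbabilityTheory
open scoped Finset

/-! ### Gibbs' inequality -/

theorem mul_log_sub_mul_log_le_sub {x y : ℝ} (hx : 0 ≤ x) (hy : 0 ≤ y) (hxy : 0 < x → 0 < y) :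
    x * log y - x * log x ≤ y - x := by
  rcases hx.eq_or_lt with rfl | hx
  · simpa using hy
  · have hlog := log_le_sub_one_of_pos (div_pos (hxy hx) hx)
    calc x * log y - x * log x = x * log (y / x) := by
          rw [log_div (hxy hx).ne' hx.ne', mul_sub]
      _ ≤ x * (y / x - 1) := by gcongr
      _ = y - x := by field_simp

theorem Hent_le_sum_mul_neg_logb {B : Type*} [Fintype B] {P Q : B → ℝ} (hP : ∀ b, 0 ≤ P b)
    (hQ : ∀ b, 0 ≤ Q b) (hPQ : ∀ b, 0 < P b → 0 < Q b) (hsum : ∑ b, Q b ≤ ∑ b, P b) :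
    Hent P ≤ ∑ b, P b * -logb 2 (Q b) := by
  have hlog : ∑ b, (P b * log (Q b) - P b * log (P b)) ≤ 0 :=
    calc ∑ b, (P b * log (Q b) - P b * log (P b)) ≤ ∑ b, (Q b - P b) :=
          Finset.sum_le_sum fun b _ => mul_log_sub_mul_log_le_sub (hP b) (hQ b) (hPQ b)
      _ ≤ 0 := by rw [Finset.sum_sub_distrib]; linarith
  have hdiff : Hent P - ∑ b, P b * -logb 2 (Q b)
      = (∑ b, (P b * log (Q b) - P b * log (P b))) / log 2 := by
    rw [Hent, ← Finset.sum_neg_distrib, ← Finset.sum_sub_distrib, Finset.sum_div]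
    refine Finset.sum_congr rfl fun b _ => ?_
    simp only [logb]
    ring
  have := div_nonpos_of_nonpos_of_nonneg hlog (log_nonneg one_le_two)
  linarith

theorem Hent_comp_equiv {A B : Type*} [Fintype A] [Fintype B] (P : B → ℝ) (e : A ≃ B) :
    Hent (P ∘ e) = Hent P :=
  congrArg Neg.neg (e.sum_comp fun b => P b * logb 2 (P b))

/-! ### Letter frequencies and the two-part code -/

section LetterFreq

variable {ι A : Type*} [Fintype ι] [DecidableEq A]

/-- The type of the word `y`, unnormalized: the number of occurrences of the letter `a`. -/
def letterCount (y : ι → A) (a : A) : ℕ := #{i | y i = a}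

/-- The type of the word `y`: its empirical distribution (zero if `y` is the empty word). -/
noncomputable def letterFreq (y : ι → A) (a : A) : ℝ := letterCount y a / Fintype.card ι

theorem letterCount_ne_zero_iff {y : ι → A} {a : A} :
    letterCount y a ≠ 0 ↔ a ∈ Finset.univ.image y := by
  simp [letterCount, Finset.filter_eq_empty_iff]

theorem letterCount_le_card (y : ι → A) (a : A) : letterCount y a ≤ Fintype.card ι :=
  Finset.card_le_univ _

theorem sum_letterCount [Fintype A] (y : ι → A) : ∑ a, letterCount y a = Fintype.card ι :=
  (Finset.card_eq_sum_card_fiberwise fun _ _ => Finset.mem_coe.2 (Finset.mem_univ _)).symm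

theorem letterFreq_nonneg (y : ι → A) (a : A) : 0 ≤ letterFreq y a := by
  unfold letterFreq; positivity

theorem letterFreq_apply_pos (y : ι → A) (i : ι) : 0 < letterFreq y (y i) := by
  have : Nonempty ι := ⟨i⟩
  have hcount : letterCount y (y i) ≠ 0 := letterCount_ne_zero_iff.2 (by simp)
  unfold letterFreq; positivity

theorem letterFreq_pos_iff {y : ι → A} {a : A} : 0 < letterFreq y a ↔ ∃ i, y i = a := by
  refine ⟨fun h => ?_, fun ⟨i, hi⟩ => hi ▸ letterFreq_apply_pos y i⟩
  have hcount : letterCount y a ≠ 0 := fun h0 => by simp [letterFreq, h0] at h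
  simpa using letterCount_ne_zero_iff.1 hcount

theorem sum_letterFreq [Fintype A] [Nonempty ι] (y : ι → A) : ∑ a, letterFreq y a = 1 := by
  simp only [letterFreq]
  rw [← Finset.sum_div, ← Nat.cast_sum, sum_letterCount, div_self (by simp)]

theorem card_mul_letterFreq (y : ι → A) (a : A) :
    Fintype.card ι * letterFreq y a = letterCount y a := by
  rcases isEmpty_or_nonempty ι
  · simp [letterCount]
  · rw [letterFreq, mul_div_cancel₀ _ (by simp)]

theorem card_mul_sum_letterFreq_mul [Fintype A] (y : ι → A) (f : A → ℝ) :
    Fintype.card ι * ∑ a, letterFreq y a * f a = ∑ i, f (y i) := by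
  simp_rw [Finset.mul_sum, ← mul_assoc, card_mul_letterFreq, letterCount]
  rw [← Finset.sum_fiberwise' Finset.univ y f]
  simp

theorem card_mul_Hent_letterFreq [Fintype A] (y : ι → A) :
    Fintype.card ι * Hent (letterFreq y) = -∑ i, logb 2 (letterFreq y (y i)) := by
  rw [Hent, mul_neg, card_mul_sum_letterFreq_mul]

theorem Hent_letterFreq_le_mean_neg_logb [Fintype A] [Nonempty ι] (y : ι → A) {Q : A → ℝ}
    (hQ : ∀ a, 0 ≤ Q a) (hQ_sum : ∑ a, Q a ≤ 1) (hQ_pos : ∀ i, 0 < Q (y i)) :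
    Hent (letterFreq y) ≤ (∑ i, -logb 2 (Q (y i))) / Fintype.card ι := by
  rw [le_div_iff₀' (by simp [Fintype.card_pos]),
    ← card_mul_sum_letterFreq_mul y fun a => -logb 2 (Q a)]
  gcongr
  refine Hent_le_sum_mul_neg_logb (letterFreq_nonneg y) hQ (fun a ha => ?_)
    (hQ_sum.trans_eq (sum_letterFreq y).symm)
  obtain ⟨i, rfl⟩ := letterFreq_pos_iff.1 ha
  exact hQ_pos i

end LetterFreq

section TypeCode

/-- The weight given to a letter occurring `j` times in a word over an alphabet of size `N`:
`2 j` bits for the multiplicity, and `log₂ N` bits for the letter itself if it occurs. -/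
noncomputable def multiplicityWeight (N j : ℕ) : ℝ := if j = 0 then 1 else (1 / 4) ^ j / N

theorem multiplicityWeight_nonneg (N j : ℕ) : 0 ≤ multiplicityWeight N j := by
  unfold multiplicityWeight; split_ifs <;> positivity

theorem multiplicityWeight_pos {N : ℕ} (hN : N ≠ 0) (j : ℕ) : 0 < multiplicityWeight N j := by
  unfold multiplicityWeight; split_ifs <;> positivity

theorem logb_multiplicityWeight {N : ℕ} (hN : N ≠ 0) (j : ℕ) :
    logb 2 (multiplicityWeight N j) = -(2 * j + if j = 0 then 0 else logb 2 N) := by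
  have hquarter : logb 2 (1 / 4) = -2 := by
    rw [show (1 / 4 : ℝ) = 2 ^ (-2 : ℝ) by norm_num [rpow_neg]]
    exact logb_rpow two_pos (by norm_num)
  rcases eq_or_ne j 0 with rfl | hj
  · simp [multiplicityWeight]
  · rw [multiplicityWeight, if_neg hj, if_neg hj, logb_div (by positivity) (by positivity),
      logb_pow, hquarter]
    ring

theorem sum_range_multiplicityWeight_le (N m : ℕ) :
    ∑ j ∈ Finset.range (m + 1), multiplicityWeight N j ≤ 1 + 1 / (3 * N) := by
  have hgeom : ∑ j ∈ Finset.range (m + 1), multiplicityWeight N j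
      = 1 + (1 - (1 / 4) ^ m) * (1 / (3 * N)) := by
    induction m with
    | zero => simp [multiplicityWeight]
    | succ m ih =>
      rw [Finset.sum_range_succ, ih, multiplicityWeight, if_neg m.succ_ne_zero]
      ring
  rw [hgeom]
  gcongr
  exact mul_le_of_le_one_left (by positivity) (sub_le_self _ (by positivity))

theorem sum_prod_multiplicityWeight_le_two (A : Type*) [Fintype A] [DecidableEq A] (m : ℕ) :
    ∑ c ∈ Fintype.piFinset fun _ : A => Finset.range (m + 1),
      ∏ a, multiplicityWeight (Fintype.card A) (c a) ≤ 2 := by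
  set N := Fintype.card A with hN
  have hexponent : (N : ℝ) * (1 / (3 * N)) ≤ 1 / 3 :=
    calc (N : ℝ) * (1 / (3 * N)) = N / N * (1 / 3) := by ring
      _ ≤ 1 / 3 := mul_le_of_le_one_left (by norm_num) (div_self_le_one _)
  rw [← Finset.prod_univ_sum, Finset.prod_const, Finset.card_univ, ← hN]
  calc (∑ j ∈ Finset.range (m + 1), multiplicityWeight N j) ^ N
      ≤ (1 + 1 / (3 * N)) ^ N :=
        pow_le_pow_left₀ (Finset.sum_nonneg fun j _ => multiplicityWeight_nonneg N j)
          (sum_range_multiplicityWeight_le N m) N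
    _ ≤ exp (1 / (3 * N)) ^ N := by
        gcongr
        rw [add_comm]
        exact add_one_le_exp _
    _ = exp (N * (1 / (3 * N))) := (exp_nat_mul _ N).symm
    _ ≤ exp (1 / 3) := exp_le_exp.2 hexponent
    _ ≤ 2 := by
        refine le_of_pow_le_pow_left₀ three_ne_zero zero_le_two ?_
        rw [← exp_nat_mul]
        norm_num
        linarith [exp_one_lt_three]

variable {ι A : Type*} [Fintype ι] [Fintype A] [DecidableEq A]

/-- The probability which the two-part code assigns to the word `y`: the first factor encodes the
type of `y`, the second one encodes `y` by the product of the letter frequencies of that type. -/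
noncomputable def typeCodeProb (y : ι → A) : ℝ :=
  (∏ a, multiplicityWeight (Fintype.card A) (letterCount y a)) * ∏ i, letterFreq y (y i)

theorem multiplicityWeight_letterCount_pos (y : ι → A) (a : A) :
    0 < multiplicityWeight (Fintype.card A) (letterCount y a) :=
  have : Nonempty A := ⟨a⟩
  multiplicityWeight_pos Fintype.card_ne_zero _

theorem typeCodeProb_pos (y : ι → A) : 0 < typeCodeProb y :=
  mul_pos (Finset.prod_pos fun a _ => multiplicityWeight_letterCount_pos y a)
    (Finset.prod_pos fun i _ => letterFreq_apply_pos y i)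

theorem neg_logb_typeCodeProb (y : ι → A) :
    -logb 2 (typeCodeProb y) = 2 * Fintype.card ι
      + #(Finset.univ.image y) * logb 2 (Fintype.card A)
      + Fintype.card ι * Hent (letterFreq y) := by
  have hweight (a : A) : logb 2 (multiplicityWeight (Fintype.card A) (letterCount y a))
      = -(2 * letterCount y a
        + if a ∈ Finset.univ.image y then logb 2 (Fintype.card A) else 0) := by
    have : Nonempty A := ⟨a⟩
    rw [logb_multiplicityWeight Fintype.card_ne_zero, ← ite_not]
    simp only [← letterCount_ne_zero_iff, ne_eq]
  have hcount : ∑ a, (letterCount y a : ℝ) = Fintype.card ι := mod_cast sum_letterCount y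
  have hweight_ne (a) := (multiplicityWeight_letterCount_pos y a).ne'
  have hfreq_ne (i) := (letterFreq_apply_pos y i).ne'
  rw [typeCodeProb, logb_mul (Finset.prod_ne_zero_iff.2 fun a _ => hweight_ne a)
      (Finset.prod_ne_zero_iff.2 fun i _ => hfreq_ne i),
    logb_prod _ _ fun a _ => hweight_ne a, logb_prod _ _ fun i _ => hfreq_ne i,
    card_mul_Hent_letterFreq]
  simp_rw [hweight]
  rw [Finset.sum_neg_distrib, Finset.sum_add_distrib, ← Finset.mul_sum, hcount,
    Finset.sum_ite_mem, Finset.univ_inter, Finset.sum_const, nsmul_eq_mul]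
  ring

variable [DecidableEq ι]

theorem sum_prod_letterFreq_of_letterCount_eq_le_one (c : A → ℕ) :
    ∑ y : ι → A with letterCount y = c, ∏ i, letterFreq y (y i) ≤ 1 := by
  rcases Finset.eq_empty_or_nonempty {y : ι → A | letterCount y = c} with hempty | ⟨z, hz⟩
  · simp [hempty]
  · have hz : letterCount z = c := (Finset.mem_filter.1 hz).2
    calc ∑ y : ι → A with letterCount y = c, ∏ i, letterFreq y (y i)
        = ∑ y : ι → A with letterCount y = c, ∏ i, letterFreq z (y i) := by
          refine Finset.sum_congr rfl fun y hy => ?_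
          simp only [letterFreq, (Finset.mem_filter.1 hy).2, hz]
      _ ≤ ∑ y : ι → A, ∏ i, letterFreq z (y i) :=
          Finset.sum_le_univ_sum_of_nonneg fun y =>
            Finset.prod_nonneg fun i _ => letterFreq_nonneg z (y i)
      _ = ∏ _i : ι, ∑ a, letterFreq z a := (Fintype.prod_sum fun _ a => letterFreq z a).symm
      _ = 1 := Finset.prod_eq_one fun i _ =>
          have : Nonempty ι := ⟨i⟩
          sum_letterFreq z

theorem sum_weight_letterCount_mul_prod_letterFreq_le {W : (A → ℕ) → ℝ} (hW : ∀ c, 0 ≤ W c)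
    {T : Finset (A → ℕ)} (hT : ∀ y : ι → A, letterCount y ∈ T) :
    ∑ y : ι → A, W (letterCount y) * ∏ i, letterFreq y (y i) ≤ ∑ c ∈ T, W c := by
  rw [← Finset.sum_fiberwise_of_maps_to fun y _ => hT y]
  refine Finset.sum_le_sum fun c _ => ?_
  calc ∑ y : ι → A with letterCount y = c, W (letterCount y) * ∏ i, letterFreq y (y i)
      = W c * ∑ y : ι → A with letterCount y = c, ∏ i, letterFreq y (y i) := by
        rw [Finset.mul_sum]
        exact Finset.sum_congr rfl fun y hy => by rw [(Finset.mem_filter.1 hy).2]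
    _ ≤ W c := mul_le_of_le_one_right (hW c) (sum_prod_letterFreq_of_letterCount_eq_le_one c)

/-- Over all types, the weights sum to at most `2`; the zero type, which is not the type of any
nonempty word, accounts for `1` of this. -/
theorem sum_typeCodeProb_le_one [Nonempty ι] : ∑ y : ι → A, typeCodeProb y ≤ 1 := by
  set W : (A → ℕ) → ℝ := fun c => ∏ a, multiplicityWeight (Fintype.card A) (c a)
  set T : Finset (A → ℕ) := Fintype.piFinset fun _ => Finset.range (Fintype.card ι + 1)
  have hmem (y : ι → A) : letterCount y ∈ T.erase 0 := by
    refine Finset.mem_erase.2 ⟨fun h => ?_, Fintype.mem_piFinset.2 fun a =>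
      Finset.mem_range.2 (Nat.lt_succ_of_le (letterCount_le_card y a))⟩
    have hsum := sum_letterCount y
    simp [h, eq_comm] at hsum
  have hzero : W 0 = 1 := by simp [W, multiplicityWeight]
  have herase : W 0 + ∑ c ∈ T.erase 0, W c = ∑ c ∈ T, W c :=
    Finset.add_sum_erase T W (by simp [T])
  have hT : ∑ c ∈ T, W c ≤ 2 := sum_prod_multiplicityWeight_le_two A _
  have hcode : ∑ y : ι → A, typeCodeProb y ≤ ∑ c ∈ T.erase 0, W c :=
    sum_weight_letterCount_mul_prod_letterFreq_le
      (fun c => Finset.prod_nonneg fun a _ => multiplicityWeight_nonneg _ (c a)) hmem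
  linarith

end TypeCode

/-! ### Conditional information -/

section FiniteValued

variable {Ω B : Type*} {m m₀ : MeasurableSpace Ω} [MeasurableSpace B] [MeasurableSingletonClass B]
  {μ : Measure Ω} {Y : Ω → B}

theorem integrable_comp_of_finite [IsFiniteMeasure μ] [Finite B] (hY : Measurable Y) (f : B → ℝ) :
    Integrable (fun ω => f (Y ω)) μ :=
  (Integrable.of_finite (f := f) (μ := μ.map Y)).comp_measurable hY

theorem integral_comp_eq_sum [IsFiniteMeasure μ] [Fintype B] (hY : Measurable Y) (f : B → ℝ) :
    ∫ ω, f (Y ω) ∂μ = ∑ b, μ.real (Y ⁻¹' {b}) * f b := by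
  have hf : Integrable f (μ.map Y) := .of_finite
  rw [← integral_map hY.aemeasurable hf.aestronglyMeasurable, integral_fintype hf]
  simp only [smul_eq_mul, map_measureReal_apply hY (measurableSet_singleton _)]

theorem sum_measureReal_preimage_singleton_eq_one [IsProbabilityMeasure μ] [Fintype B]
    (hY : Measurable Y) : ∑ b, μ.real (Y ⁻¹' {b}) = 1 := by
  simpa using (integral_comp_eq_sum (μ := μ) hY fun _ => 1).symm

theorem mul_abs_logb_two_le {x : ℝ} (h0 : 0 ≤ x) (h1 : x ≤ 1) : x * |logb 2 x| ≤ 1 / log 2 := by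
  have hlog2 : 0 < log 2 := log_pos one_lt_two
  rcases h0.eq_or_lt with rfl | hx
  · simpa using hlog2.le
  · calc x * |logb 2 x| = |log x * x| / log 2 := by
          rw [logb, abs_div, abs_mul, abs_of_pos hlog2, abs_of_pos hx]
          ring
      _ ≤ 1 / log 2 := by
          gcongr
          exact (abs_log_mul_self_lt x hx h1).le

section Event

variable {s : Set Ω}

theorem condProb_nonneg : 0 ≤ᵐ[μ] μ⟦s | m⟧ :=
  condExp_nonneg (ae_of_all _ fun ω => Set.indicator_nonneg (fun _ _ => zero_le_one) ω)

variable [IsFiniteMeasure μ]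

theorem condProb_le_one (hm : m ≤ m₀) (hs : MeasurableSet s) : μ⟦s | m⟧ ≤ᵐ[μ] 1 := by
  have hmono : μ⟦s | m⟧ ≤ᵐ[μ] μ[fun _ => (1 : ℝ) | m] :=
    condExp_mono ((integrable_const 1).indicator hs) (integrable_const 1)
      (ae_of_all _ fun ω => Set.indicator_le_self' (fun _ _ => zero_le_one) ω)
  rwa [condExp_const hm] at hmono

theorem trim_restrict_eq_withDensity_condProb (hm : m ≤ m₀) (hs : MeasurableSet s) :
    (μ.restrict s).trim hm = (μ.trim hm).withDensity fun ω => ENNReal.ofReal ((μ⟦s | m⟧) ω) := by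
  have hcond : Measurable[m] fun ω => ENNReal.ofReal ((μ⟦s | m⟧) ω) :=
    stronglyMeasurable_condExp.measurable.ennreal_ofReal
  refine @Measure.ext _ m _ _ fun t ht => ?_
  rw [trim_measurableSet_eq hm ht, withDensity_apply _ ht, restrict_trim hm μ ht,
    lintegral_trim hm hcond, Measure.restrict_apply (hm t ht),
    ← ofReal_integral_eq_lintegral_ofReal integrable_condExp.integrableOn
      (ae_restrict_of_ae condProb_nonneg),
    setIntegral_condExp hm ((integrable_const 1).indicator hs) ht, setIntegral_indicator hs]
  simp

theorem setLIntegral_eq_lintegral_condProb_mul (hm : m ≤ m₀) (hs : MeasurableSet s)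
    {h : Ω → ENNReal} (hh : Measurable[m] h) :
    ∫⁻ ω in s, h ω ∂μ = ∫⁻ ω, ENNReal.ofReal ((μ⟦s | m⟧) ω) * h ω ∂μ := by
  have hcond : Measurable[m] fun ω => ENNReal.ofReal ((μ⟦s | m⟧) ω) :=
    stronglyMeasurable_condExp.measurable.ennreal_ofReal
  rw [← lintegral_trim hm hh, trim_restrict_eq_withDensity_condProb hm hs,
    lintegral_withDensity_eq_lintegral_mul _ hcond hh, lintegral_trim hm (hcond.mul hh)]
  rfl

theorem ae_mem_imp_condProb_pos (hm : m ≤ m₀) (hs : MeasurableSet s) :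
    ∀ᵐ ω ∂μ, ω ∈ s → 0 < (μ⟦s | m⟧) ω := by
  have ht : MeasurableSet[m] {ω | (μ⟦s | m⟧) ω ≤ 0} :=
    measurableSet_le stronglyMeasurable_condExp.measurable measurable_const
  have hint : ∫ ω in {ω | (μ⟦s | m⟧) ω ≤ 0}, s.indicator (fun _ => (1 : ℝ)) ω ∂μ ≤ 0 := by
    rw [← setIntegral_condExp hm ((integrable_const 1).indicator hs) ht]
    exact setIntegral_nonpos (hm _ ht) fun _ hω => hω
  have hnull : μ ({ω | (μ⟦s | m⟧) ω ≤ 0} ∩ s) = 0 := by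
    rw [setIntegral_indicator hs] at hint
    simpa [measureReal_eq_zero_iff] using hint.antisymm (integral_nonneg fun _ => zero_le_one)
  filter_upwards [measure_eq_zero_iff_ae_notMem.1 hnull] with ω hω hωs
  exact not_le.1 fun hle => hω ⟨hle, hωs⟩

/-- Pulling out the conditional probability turns the integrand into the bounded `x |log₂ x|`. -/
theorem integrableOn_logb_condProb (hm : m ≤ m₀) (hs : MeasurableSet s) :
    IntegrableOn (fun ω => logb 2 ((μ⟦s | m⟧) ω)) s μ := by
  have hmeas : Measurable[m] fun ω => logb 2 ((μ⟦s | m⟧) ω) :=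
    (measurable_log.comp stronglyMeasurable_condExp.measurable).div_const _
  refine ⟨(hmeas.mono hm le_rfl).aestronglyMeasurable, ?_⟩
  rw [hasFiniteIntegral_iff_enorm,
    setLIntegral_eq_lintegral_condProb_mul hm hs (h := fun ω => ‖logb 2 ((μ⟦s | m⟧) ω)‖ₑ)
      (measurable_enorm.comp hmeas)]
  refine (lintegral_mono_ae (g := fun _ => ENNReal.ofReal (1 / log 2)) ?_).trans_lt
    (by simp [ENNReal.mul_lt_top_iff])
  filter_upwards [condProb_nonneg (m := m) (s := s), condProb_le_one hm hs] with ω h0 h1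
  rw [enorm_eq_ofReal_abs, ← ENNReal.ofReal_mul h0]
  exact ENNReal.ofReal_le_ofReal (mul_abs_logb_two_le h0 h1)

end Event

/-- The information content of the value taken by `Y`, given the σ-algebra `m`. -/
noncomputable def condInfo (μ : Measure Ω) (m : MeasurableSpace Ω) (Y : Ω → B) (ω : Ω) : ℝ :=
  -logb 2 ((μ⟦Y ⁻¹' {Y ω} | m⟧) ω)

variable [IsFiniteMeasure μ]

theorem sum_condProb_preimage_singleton [Fintype B] (hm : m ≤ m₀) (hY : Measurable Y) :
    ∀ᵐ ω ∂μ, ∑ b, (μ⟦Y ⁻¹' {b} | m⟧) ω = 1 := by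
  have hsum : ∑ b, (Y ⁻¹' {b}).indicator (fun _ => (1 : ℝ)) = fun _ => 1 := by
    classical
    funext ω
    simp [Finset.sum_apply, Set.indicator_apply]
  have hcond := condExp_finsetSum (μ := μ) (s := Finset.univ)
    (fun b _ => (integrable_const (1 : ℝ)).indicator (hY (measurableSet_singleton b))) m
  rw [hsum, condExp_const hm] at hcond
  filter_upwards [hcond] with ω hω
  rw [← Finset.sum_apply, ← hω]

theorem ae_condProb_preimage_singleton_self_pos [Countable B] (hm : m ≤ m₀) (hY : Measurable Y) :
    ∀ᵐ ω ∂μ, 0 < (μ⟦Y ⁻¹' {Y ω} | m⟧) ω := by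
  filter_upwards [ae_all_iff.2 fun b =>
    ae_mem_imp_condProb_pos (μ := μ) hm (hY (measurableSet_singleton b))] with ω hω
  exact hω (Y ω) rfl

theorem integrable_condInfo [Finite B] (hm : m ≤ m₀) (hY : Measurable Y) :
    Integrable (condInfo μ m Y) μ := by
  have hcover : ⋃ b, Y ⁻¹' {b} = Set.univ := by
    rw [← Set.preimage_iUnion, Set.iUnion_of_singleton, Set.preimage_univ]
  rw [← integrableOn_univ, ← hcover, integrableOn_finite_iUnion]
  intro b
  have hb : MeasurableSet (Y ⁻¹' {b}) := hY (measurableSet_singleton b)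
  refine (integrableOn_logb_condProb hm hb).neg.congr_fun (fun ω hω => ?_) hb
  rw [condInfo, Set.mem_singleton_iff.1 hω]
  rfl

end FiniteValued

/-! ### Blocks of a process -/

section Blocks

variable {α : Type*}

theorem shift_iterate_apply (s : ℕ) (ω : ℤ → α) (i : ℤ) : shift^[s] ω i = ω (i + s) := by
  induction s generalizing i with
  | zero => simp
  | succ s ih =>
    rw [Function.iterate_succ_apply', shift, ih]
    push_cast
    congr 1
    ring

theorem blk_zero_shift_iterate (s k : ℕ) (ω : ℤ → α) : blk 0 k (shift^[s] ω) = blk s k ω := by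
  funext i
  rw [blk, shift_iterate_apply, blk]
  congr 1
  push_cast
  ring

/-- The first `p` consecutive nonoverlapping `k`-blocks `X_1^k, X_{k+1}^{2k}, …` of a sequence,
as a word of length `p` over the alphabet of `k`-blocks. -/
def blocks (p k : ℕ) (ω : ℤ → α) : Fin p → Fin k → α := fun i => blk (i * k) k ω

/-- Cutting a word of length `p * k` into `p` words of length `k`. -/
def cutEquiv (α : Type*) (p k : ℕ) : (Fin (p * k) → α) ≃ (Fin p → Fin k → α) :=
  (finProdFinEquiv.symm.arrowCongr (Equiv.refl α)).trans (Equiv.curry (Fin p) (Fin k) α)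

theorem cutEquiv_blk (p k : ℕ) (ω : ℤ → α) :
    cutEquiv α p k (blk 0 (p * k) ω) = blocks p k ω := by
  funext i j
  change ω _ = ω _
  congr 1
  simp only [Equiv.symm_symm, finProdFinEquiv_apply_val]
  push_cast
  ring

theorem Dcount_eq_card_image_blocks [DecidableEq α] (k n : ℕ) (ω : ℤ → α) :
    Dcount k n ω = #(Finset.univ.image (blocks (n / k) k ω)) := by
  rw [Dcount, ← Set.ncard_coe_finset]
  congr 1
  ext w
  simp [blocks, Fin.exists_iff]

theorem empDist_eq_letterFreq_blocks [DecidableEq α] (k n : ℕ) (ω : ℤ → α) :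
    empDist k n ω = letterFreq (blocks (n / k) k ω) := by
  funext w
  rw [empDist, letterFreq, letterCount, Finset.card_filter, Fintype.card_fin,
    ← Fin.sum_univ_eq_sum_range fun i => if blk (i * k) k ω = w then (1 : ℝ) else 0]
  push_cast
  rfl

theorem plugIn_eq_Hent_letterFreq_blocks [Fintype α] [DecidableEq α] (k n : ℕ) (ω : ℤ → α) :
    plugIn k n ω = Hent (letterFreq (blocks (n / k) k ω)) := by
  rw [plugIn, empDist_eq_letterFreq_blocks]

theorem logb_card_block [Fintype α] (k : ℕ) :
    logb 2 (Fintype.card (Fin k → α)) = k * logb 2 (Fintype.card α) := by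
  rw [Fintype.card_fun, Fintype.card_fin, Nat.cast_pow, logb_pow]

theorem neg_logb_typeCodeProb_blocks_le_Kcode [Fintype α] [DecidableEq α] (p : ℕ) {k : ℕ}
    (hk : 0 < k) (ω : ℤ → α) :
    -logb 2 (typeCodeProb (blocks p k ω)) ≤ Kcode k (p * k) ω := by
  have hlogk : 0 ≤ logb 2 (k : ℝ) := div_nonneg (log_natCast_nonneg k) (log_nonneg one_le_two)
  have hlogα : 0 ≤ logb 2 (Fintype.card α : ℝ) :=
    div_nonneg (log_natCast_nonneg _) (log_nonneg one_le_two)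
  have hD : (0 : ℝ) ≤ Dcount k (p * k) ω := by positivity
  have hratio : ((p * k : ℕ) : ℝ) / k = p := by
    push_cast
    field_simp
  rw [neg_logb_typeCodeProb, logb_card_block, Kcode, hratio, plugIn_eq_Hent_letterFreq_blocks]
  rw [Dcount_eq_card_image_blocks] at hD ⊢
  rw [Nat.mul_div_cancel p hk] at hD ⊢
  rw [Fintype.card_fin]
  linarith [mul_nonneg (mul_nonneg k.cast_nonneg hlogα) hD, mul_nonneg k.cast_nonneg hlogα]

variable [MeasurableSpace α]

theorem measurable_blk (s k : ℕ) : Measurable (blk s k : (ℤ → α) → Fin k → α) :=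
  measurable_pi_lambda _ fun _ => measurable_pi_apply _

theorem measurable_blocks (p k : ℕ) : Measurable (blocks p k : (ℤ → α) → Fin p → Fin k → α) :=
  measurable_pi_lambda _ fun i => measurable_blk (i * k) k

theorem condP_shift_iterate (μ : Measure (ℤ → α)) {k : ℕ} (w : Fin k → α) (s : ℕ) (ω : ℤ → α) :
    condP μ k w (shift^[s] ω) = condP μ k w ω := by
  have hinv : condP μ k w ∘ shift = condP μ k w :=
    MeasurableSpace.comp_eq_of_measurable_invariants stronglyMeasurable_condExp.measurable
  induction s with
  | zero => rfl
  | succ s ih => rw [Function.iterate_succ_apply', ← ih]; exact congrFun hinv _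

theorem condInfo_shift_iterate (μ : Measure (ℤ → α)) (k s : ℕ) (ω : ℤ → α) :
    condInfo μ (MeasurableSpace.invariants shift) (blk 0 k) (shift^[s] ω)
      = -logb 2 (condP μ k (blk s k ω) ω) := by
  rw [← condP_shift_iterate μ _ s, ← blk_zero_shift_iterate]
  rfl

theorem Hblock_mul_eq_Hent_blocks [Fintype α] (μ : Measure (ℤ → α)) (p k : ℕ) :
    Hblock μ (p * k) = Hent fun y => μ.real (blocks p k ⁻¹' {y}) := by
  rw [Hblock, ← Hent_comp_equiv _ (cutEquiv α p k)]
  congr 1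
  funext x
  have hpreimage : {ω | blk 0 (p * k) ω = x} = blocks p k ⁻¹' {cutEquiv α p k x} := by
    ext ω
    simp [← cutEquiv_blk]
  rw [pblock, hpreimage]
  rfl

variable [MeasurableSingletonClass α] {μ : Measure (ℤ → α)} [IsProbabilityMeasure μ]

theorem integrable_Dcount [Finite α] (k n : ℕ) : Integrable (fun ω => (Dcount k n ω : ℝ)) μ := by
  classical
  simp_rw [Dcount_eq_card_image_blocks]
  exact integrable_comp_of_finite (measurable_blocks (n / k) k)
    fun y => (#(Finset.univ.image y) : ℝ)

variable [Fintype α] [DecidableEq α]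

theorem integrable_plugIn (k n : ℕ) : Integrable (plugIn k n) μ := by
  simp_rw [funext (plugIn_eq_Hent_letterFreq_blocks (α := α) k n)]
  exact integrable_comp_of_finite (measurable_blocks (n / k) k) fun y => Hent (letterFreq y)

theorem integrable_Kcode (k n : ℕ) : Integrable (Kcode k n) μ :=
  ((integrable_const _).add (((integrable_plugIn k n).add (integrable_const _)).const_mul _)).add
    (((integrable_Dcount k n).add (integrable_const _)).const_mul _)

theorem integral_Kcode (k n : ℕ) :
    ∫ ω, Kcode k n ω ∂μ = 2 * logb 2 k + (n / k) * ((∫ ω, plugIn k n ω ∂μ) + 2)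
      + 3 * k * logb 2 (Fintype.card α) * ((∫ ω, (Dcount k n ω : ℝ) ∂μ) + 1) := by
  have hplugIn : Integrable (fun ω => plugIn k n ω + 2) μ :=
    (integrable_plugIn k n).add (integrable_const 2)
  have hD : Integrable (fun ω => (Dcount k n ω : ℝ) + 1) μ :=
    (integrable_Dcount k n).add (integrable_const 1)
  simp only [Kcode]
  rw [integral_add (f := fun ω => 2 * logb 2 k + n / k * (plugIn k n ω + 2))
      ((integrable_const _).add (hplugIn.const_mul _)) (hD.const_mul _),
    integral_add (integrable_const _) (hplugIn.const_mul _), integral_const_mul ((n : ℝ) / k),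
    integral_const_mul (3 * (k : ℝ) * _), integral_add (integrable_plugIn k n) (integrable_const 2),
    integral_add (integrable_Dcount k n) (integrable_const 1)]
  simp

theorem Hblock_mul_le_integral_Kcode {p k : ℕ} (hp : 0 < p) (hk : 0 < k) :
    Hblock μ (p * k) ≤ ∫ ω, Kcode k (p * k) ω ∂μ := by
  have : Nonempty (Fin p) := Fin.pos_iff_nonempty.1 hp
  have hY : Measurable (blocks p k : (ℤ → α) → _) := measurable_blocks p k
  calc Hblock μ (p * k) = Hent fun y => μ.real (blocks p k ⁻¹' {y}) :=
        Hblock_mul_eq_Hent_blocks μ p k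
    _ ≤ ∑ y, μ.real (blocks p k ⁻¹' {y}) * -logb 2 (typeCodeProb y) :=
        Hent_le_sum_mul_neg_logb (fun _ => measureReal_nonneg) (fun y => (typeCodeProb_pos y).le)
          (fun y _ => typeCodeProb_pos y)
          (sum_typeCodeProb_le_one.trans_eq (sum_measureReal_preimage_singleton_eq_one hY).symm)
    _ = ∫ ω, -logb 2 (typeCodeProb (blocks p k ω)) ∂μ := (integral_comp_eq_sum hY _).symm
    _ ≤ ∫ ω, Kcode k (p * k) ω ∂μ :=
        integral_mono (integrable_comp_of_finite hY fun y => -logb 2 (typeCodeProb y))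
          (integrable_Kcode k _) (neg_logb_typeCodeProb_blocks_le_Kcode p hk)

end Blocks

/-! ### Stationarity -/

section Stationary

variable {α : Type*} [MeasurableSpace α] {μ : Measure (ℤ → α)} {k : ℕ}

theorem measurePreserving_shift_iterate_mul (hstat : MeasurePreserving shift^[k] μ μ) (i : ℕ) :
    MeasurePreserving shift^[i * k] μ μ := by
  rw [mul_comm, Function.iterate_mul]
  exact hstat.iterate i

variable [MeasurableSingletonClass α] [IsProbabilityMeasure μ]

theorem integrable_condInfo_shift_iterate_mul [Finite α]
    (hstat : MeasurePreserving shift^[k] μ μ) (i : ℕ) :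
    Integrable (fun ω => condInfo μ (MeasurableSpace.invariants shift) (blk 0 k)
      (shift^[i * k] ω)) μ :=
  (measurePreserving_shift_iterate_mul hstat i).integrable_comp_of_integrable
    (integrable_condInfo (MeasurableSpace.invariants_le _) (measurable_blk 0 k))

theorem integral_condInfo_shift_iterate_mul [Finite α]
    (hstat : MeasurePreserving shift^[k] μ μ) (i : ℕ) :
    ∫ ω, condInfo μ (MeasurableSpace.invariants shift) (blk 0 k) (shift^[i * k] ω) ∂μ
      = condH μ k := by
  have hpres := measurePreserving_shift_iterate_mul hstat i
  have hinfo : Integrable (condInfo μ (MeasurableSpace.invariants shift) (blk 0 k)) μ :=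
    integrable_condInfo (MeasurableSpace.invariants_le _) (measurable_blk 0 k)
  rw [← integral_map hpres.aemeasurable (by rw [hpres.map_eq]; exact hinfo.aestronglyMeasurable),
    hpres.map_eq]
  rfl

variable [Fintype α]

/-- Gibbs' inequality for the empirical distribution against `P(X_1^k = · | ℐ)`, which, being
invariant, is the same at all the blocks. -/
theorem ae_plugIn_le_mean_condInfo [DecidableEq α] (hstat : MeasurePreserving shift^[k] μ μ) {n : ℕ}
    (hn : 0 < n / k) : ∀ᵐ ω ∂μ, plugIn k n ω ≤ (∑ i : Fin (n / k),
      condInfo μ (MeasurableSpace.invariants shift) (blk 0 k) (shift^[i * k] ω)) / (n / k : ℕ) := by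
  have hm := MeasurableSpace.invariants_le (shift : (ℤ → α) → ℤ → α)
  have : Nonempty (Fin (n / k)) := Fin.pos_iff_nonempty.1 hn
  have hpos (i : ℕ) : ∀ᵐ ω ∂μ, 0 < condP μ k (blk (i * k) k ω) ω := by
    filter_upwards [(measurePreserving_shift_iterate_mul hstat i).quasiMeasurePreserving.ae
      (ae_condProb_preimage_singleton_self_pos hm (measurable_blk 0 k))] with ω hω
    rw [← condP_shift_iterate μ _ (i * k), ← blk_zero_shift_iterate]
    exact hω
  filter_upwards [sum_condProb_preimage_singleton hm (measurable_blk 0 k),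
    ae_all_iff.2 fun w : Fin k → α => condProb_nonneg (s := blk 0 k ⁻¹' {w}),
    ae_all_iff.2 hpos] with ω hsum hnonneg hpos
  simp_rw [plugIn_eq_Hent_letterFreq_blocks, condInfo_shift_iterate]
  have hgibbs := Hent_letterFreq_le_mean_neg_logb (blocks (n / k) k ω)
    (Q := fun w => condP μ k w ω) hnonneg hsum.le fun i => hpos i
  rwa [Fintype.card_fin] at hgibbs

theorem integral_plugIn_le_condH [DecidableEq α] (hstat : MeasurePreserving shift^[k] μ μ)
    {n : ℕ} (hn : 0 < n / k) : ∫ ω, plugIn k n ω ∂μ ≤ condH μ k := by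
  have hinfo (i : Fin (n / k)) := integrable_condInfo_shift_iterate_mul hstat i
  refine (integral_mono_ae (integrable_plugIn k n)
    ((integrable_finsetSum Finset.univ fun i _ => hinfo i).div_const _)
    (ae_plugIn_le_mean_condInfo hstat hn)).trans_eq ?_
  rw [integral_div, integral_finsetSum _ fun i _ => hinfo i]
  simp_rw [integral_condInfo_shift_iterate_mul hstat]
  rw [Finset.sum_const, Finset.card_univ, Fintype.card_fin, nsmul_eq_mul,
    mul_div_cancel_left₀ _ (by positivity)]

theorem rate_difference_le_expected_Dcount_general (hstat : MeasurePreserving shift^[k] μ μ)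
    {p n : ℕ} (hp : 0 < p) (hk : 0 < k) (hn : n = p * k) :
    Hblock μ n / n - condH μ k / k ≤
      2 / k + (2 / n) * logb 2 k
        + (3 * k / n) * logb 2 (Fintype.card α) * ((∫ ω, (Dcount k n ω : ℝ) ∂μ) + 1) := by
  classical
  have hn_pos : 0 < n := hn ▸ Nat.mul_pos hp hk
  have hcode : Hblock μ n ≤ ∫ ω, Kcode k n ω ∂μ := hn ▸ Hblock_mul_le_integral_Kcode hp hk
  have hplugIn : ∫ ω, plugIn k n ω ∂μ ≤ condH μ k :=
    integral_plugIn_le_condH hstat (by rwa [hn, Nat.mul_div_cancel p hk])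
  rw [integral_Kcode] at hcode
  rw [sub_le_iff_le_add, div_le_iff₀ (by positivity)]
  calc Hblock μ n ≤ 2 * logb 2 k + (n / k) * (condH μ k + 2)
        + 3 * k * logb 2 (Fintype.card α) * ((∫ ω, (Dcount k n ω : ℝ) ∂μ) + 1) :=
        hcode.trans (by gcongr)
    _ = _ := by
        field_simp
        ring

end Stationary

/-- For a stationary process over a finite alphabet, positive integers `p`, `k`
and `n = pk`, we have
`H(X_1^n)/n − H(X_1^k|ℐ)/k ≤ 2/k + (2/n) log₂ k + (3k/n) log₂|𝕏| (E[D(k,X_1^n)] + 1)`. -/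
theorem rate_difference_le_expected_Dcount
    {μ : Measure (ℤ → 𝕏)} [IsProbabilityMeasure μ]
    (hstat : MeasurePreserving shift μ μ)
    (p k n : ℕ) (hp : 0 < p) (hk : 0 < k) (hn : n = p * k) :
    Hblock μ n / n - condH μ k / k ≤
      2 / k + (2 / n) * Real.logb 2 k
        + (3 * k / n) * Real.logb 2 (Fintype.card 𝕏) *
          ((∫ ω, (Dcount k n ω : ℝ) ∂μ) + 1) :=
  rate_difference_le_expected_Dcount_general (hstat.iterate k) hp hk hn
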